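/- For every integer k ≥ 0, every real number a not of the form -j/2 with j a nonnegative integer, and every real z with 0 < z < 1: 2^{k-1}·Φ_HCB(1-k,a,z) = (4^a·z^{2a}) / (2a·C(2a,a)·(1-z²)^{k+1/2}) · ( (2a-1)·√(1-z²)·p_{k-1}(a,z²) + ₂F₁(1/2, a-1/2; a+1/2; z²)·q_{k-1}(z²) ). -/

import Mathlib

open Polynomial

/-- The generalized binomial coefficient `C(x,y) = Γ(x+1)/(Γ(y+1) Γ(x-y+1))`. -/
noncomputable def genBinom (x y : ℝ) : ℝ :=
  Real.Gamma (x + 1) / (Real.Gamma (y + 1) * Real.Gamma (x - y + 1))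

/-- The Hurwitz–Lerch type central binomial series
`Φ_HCB(s,a,z) = ∑_{n≥0} (2z)^{2(n+a)} / ( C(2(n+a), n+a) (n+a)^s )`. -/
noncomputable def PhiHCB (s : ℤ) (a z : ℝ) : ℝ :=
  ∑' n : ℕ, (2 * z) ^ (2 * ((n : ℝ) + a)) /
    (genBinom (2 * ((n : ℝ) + a)) ((n : ℝ) + a) * ((n : ℝ) + a) ^ s)

/-- The shifted factorial (Pochhammer symbol) `(α)_n = α(α+1)⋯(α+n-1)`, `(α)_0 = 1`. -/
def poch (α : ℝ) : ℕ → ℝ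
  | 0 => 1
  | n + 1 => poch α n * (α + n)

/-- The Gauss hypergeometric series `₂F₁(α,β;γ;z) = ∑_{n≥0} (α)_n (β)_n / ((γ)_n n!) zⁿ`. -/
noncomputable def Gauss2F1 (α β γ z : ℝ) : ℝ :=
  ∑' n : ℕ, poch α n * poch β n / (poch γ n * (Nat.factorial n : ℝ)) * z ^ n

/-- Lehmer's polynomials `q_k(x)` for `k ≥ -1`, shifted so that `lehmerQ n = q_{n-1}`:
`q_{-1}(x) = 1` and `q_{k+1}(x) = (2(k+1)x+1) q_k(x) + 2x(1-x) q_k'(x)`. -/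
noncomputable def lehmerQ : ℕ → Polynomial ℝ
  | 0 => 1
  | n + 1 => (C (2 * (n : ℝ)) * X + 1) * lehmerQ n + (2 * X * (1 - X)) * derivative (lehmerQ n)

/-- The polynomials `p_k(a,x)` for `k ≥ -1`, shifted so that `lehmerPa a n = p_{n-1}(a,·)`:
`p_{-1}(a,x) = 0` and `p_{k+1}(a,x) = 2((k+1-a)x+a) p_k(a,x) + 2x(1-x) ∂ₓp_k(a,x) + q_k(x)`. -/
noncomputable def lehmerPa (a : ℝ) : ℕ → Polynomial ℝ
  | 0 => 0
  | n + 1 => C 2 * (C ((n : ℝ) - a) * X + C a) * lehmerPa a n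
      + (2 * X * (1 - X)) * derivative (lehmerPa a n) + lehmerQ n

section PowerSeriesEvaluation

/-- The power series `f` converges absolutely at `x`, with sum `v`. -/
def HasAbsEval (f : PowerSeries ℝ) (x v : ℝ) : Prop :=
  (Summable fun n => ‖PowerSeries.coeff n f * x ^ n‖) ∧ ∑' n, PowerSeries.coeff n f * x ^ n = v

variable {f g : PowerSeries ℝ} {x v w : ℝ}

theorem HasAbsEval.unique (hv : HasAbsEval f x v) (hw : HasAbsEval f x w) : v = w :=
  hv.2.symm.trans hw.2

theorem HasAbsEval.add (hf : HasAbsEval f x v) (hg : HasAbsEval g x w) :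
    HasAbsEval (f + g) x (v + w) := by
  simp only [HasAbsEval, map_add, add_mul]
  refine ⟨(hf.1.add hg.1).of_nonneg_of_le (fun _ => norm_nonneg _) fun _ => norm_add_le _ _, ?_⟩
  rw [hf.1.of_norm.tsum_add hg.1.of_norm, hf.2, hg.2]

theorem HasAbsEval.mul (hf : HasAbsEval f x v) (hg : HasAbsEval g x w) :
    HasAbsEval (f * g) x (v * w) := by
  have key : ∀ n, PowerSeries.coeff n (f * g) * x ^ n =
      ∑ kl ∈ Finset.HasAntidiagonal.antidiagonal n,
        PowerSeries.coeff kl.1 f * x ^ kl.1 * (PowerSeries.coeff kl.2 g * x ^ kl.2) := by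
    intro n
    rw [PowerSeries.coeff_mul, Finset.sum_mul]
    refine Finset.sum_congr rfl fun kl hkl => ?_
    rw [← Finset.HasAntidiagonal.mem_antidiagonal.1 hkl, pow_add]
    ring
  simp only [HasAbsEval, key]
  have hs := summable_norm_sum_mul_antidiagonal_of_summable_norm hf.1 hg.1
  have h := tsum_mul_tsum_eq_tsum_sum_antidiagonal_of_summable_norm hf.1 hg.1
  rw [hf.2, hg.2] at h
  exact ⟨hs, h.symm⟩

theorem hasAbsEval_coe (p : ℝ[X]) (x : ℝ) : HasAbsEval (p : PowerSeries ℝ) x (p.eval x) := by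
  have hzero : ∀ n ∉ p.support, p.coeff n * x ^ n = 0 := by
    intro n hn
    rw [notMem_support_iff.1 hn, zero_mul]
  simp only [HasAbsEval, coeff_coe]
  refine ⟨summable_of_ne_finset_zero (s := p.support) fun n hn => ?_, ?_⟩
  · rw [hzero n hn, norm_zero]
  · rw [tsum_eq_sum (s := p.support) hzero, eval_eq_sum, sum_def]

/-- A sequence whose successive ratios tend to a limit in `(-1, 1)` is absolutely summable. -/
theorem summable_norm_of_succ_eq_mul {u ρ : ℕ → ℝ} {L : ℝ} (hu : ∀ n, u (n + 1) = ρ n * u n)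
    (hρ : Filter.Tendsto ρ Filter.atTop (nhds L)) (hL : |L| < 1) : Summable fun n => ‖u n‖ := by
  obtain ⟨r, hLr, hr⟩ := exists_between hL
  refine summable_of_ratio_norm_eventually_le hr ?_
  filter_upwards [hρ.abs.eventually_lt_const hLr] with n hn
  rw [hu, norm_norm, norm_norm, norm_mul, Real.norm_eq_abs (ρ n)]
  gcongr

end PowerSeriesEvaluation

theorem tendsto_natCast_add_div_natCast_add (b c : ℝ) :
    Filter.Tendsto (fun n : ℕ => ((n : ℝ) + b) / (n + c)) Filter.atTop (nhds 1) := by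
  simpa [add_comm] using tendsto_add_mul_div_add_mul_atTop_nhds b c (1 : ℝ) (one_ne_zero (α := ℝ))

theorem poch_mul_add (α : ℝ) (n : ℕ) : poch α n * (α + n) = α * poch (α + 1) n := by
  induction n with
  | zero => simp [poch]
  | succ n ih =>
    simp only [poch, Nat.cast_add, Nat.cast_one]
    linear_combination (α + (n + 1)) * ih

theorem poch_ne_zero {α : ℝ} (hα : ∀ n : ℕ, α + n ≠ 0) (n : ℕ) : poch α n ≠ 0 := by
  induction n with
  | zero => simp [poch]
  | succ n ih => exact mul_ne_zero ih (hα n)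

section FormalIdentities

/-- The formal binomial series of `(1 - X)^(-1/2)`. -/
noncomputable def invSqrtSeries : PowerSeries ℝ :=
  PowerSeries.mk fun n => poch (1 / 2) n / (n.factorial : ℝ)

/-- The formal hypergeometric series `₂F₁(1/2, a - 1/2; a + 1/2; X)`. -/
noncomputable def halfGaussSeries (a : ℝ) : PowerSeries ℝ :=
  PowerSeries.mk fun n =>
    poch (1 / 2) n * poch (a - 1 / 2) n / (poch (a + 1 / 2) n * (n.factorial : ℝ))

/-- The formal series `∑ (a)_n / (a + 1/2)_n (n + a)^k X^n`. -/
noncomputable def hcbSeries (a : ℝ) (k : ℕ) : PowerSeries ℝ :=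
  PowerSeries.mk fun n => poch a n / poch (a + 1 / 2) n * ((n : ℝ) + a) ^ k

theorem coeff_X_mul_derivative (f : PowerSeries ℝ) (n : ℕ) :
    PowerSeries.coeff n (PowerSeries.X * PowerSeries.derivative ℝ f) =
      n * PowerSeries.coeff n f := by
  cases n with
  | zero => simp
  | succ m =>
    rw [PowerSeries.coeff_succ_X_mul, PowerSeries.coeff_derivative]
    push_cast
    ring

theorem invSqrtSeries_ode :
    2 * (1 - PowerSeries.X) * PowerSeries.derivative ℝ invSqrtSeries = invSqrtSeries := by
  have h : 2 * PowerSeries.derivative ℝ invSqrtSeries =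
      invSqrtSeries + 2 * (PowerSeries.X * PowerSeries.derivative ℝ invSqrtSeries) := by
    ext n
    rw [two_mul, two_mul]
    rw [map_add, map_add, map_add, coeff_X_mul_derivative, PowerSeries.coeff_derivative]
    simp only [invSqrtSeries, PowerSeries.coeff_mk, poch, Nat.factorial_succ]
    push_cast
    field_simp
    ring
  linear_combination h

theorem invSqrtSeries_sq : invSqrtSeries * invSqrtSeries * (1 - PowerSeries.X) = 1 := by
  apply PowerSeries.derivative.ext
  · simp only [Derivation.leibniz, map_sub, PowerSeries.derivative_X, PowerSeries.derivative_one,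
      smul_eq_mul]
    linear_combination invSqrtSeries * invSqrtSeries_ode
  · simp [invSqrtSeries, poch]

variable {a : ℝ}

theorem add_half_add_ne_zero (ha : ∀ j : ℕ, a ≠ -(j : ℝ) / 2) (n : ℕ) : a + 1 / 2 + n ≠ 0 := by
  intro h
  apply ha (2 * n + 1)
  push_cast
  linarith

theorem natCast_add_ne_zero (ha : ∀ j : ℕ, a ≠ -(j : ℝ) / 2) (n : ℕ) : (n : ℝ) + a ≠ 0 := by
  intro h
  apply ha (2 * n)
  push_cast
  linarith

theorem halfGaussSeries_ode (ha : ∀ j : ℕ, a ≠ -(j : ℝ) / 2) :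
    2 * PowerSeries.X * PowerSeries.derivative ℝ (halfGaussSeries a) =
      PowerSeries.C (2 * a - 1) * (invSqrtSeries - halfGaussSeries a) := by
  rw [mul_assoc, two_mul]
  ext n
  have hp := poch_ne_zero (add_half_add_ne_zero ha) n
  have hf : (n.factorial : ℝ) ≠ 0 := by positivity
  have hm := poch_mul_add (a - 1 / 2) n
  rw [show a - 1 / 2 + 1 = a + 1 / 2 by ring] at hm
  rw [map_add, coeff_X_mul_derivative, PowerSeries.coeff_C_mul, map_sub]
  simp only [halfGaussSeries, invSqrtSeries, PowerSeries.coeff_mk]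
  generalize poch (a - 1 / 2) n = u at *
  generalize poch (a + 1 / 2) n = v at *
  field_simp
  linear_combination 2 * poch (1 / 2) n * hm

theorem X_mul_derivative_hcbSeries (a : ℝ) (k : ℕ) :
    PowerSeries.X * PowerSeries.derivative ℝ (hcbSeries a k) =
      hcbSeries a (k + 1) - PowerSeries.C a * hcbSeries a k := by
  ext n
  rw [map_sub, PowerSeries.coeff_C_mul, coeff_X_mul_derivative]
  simp only [hcbSeries, PowerSeries.coeff_mk]
  ring

theorem coeff_succ_hcbSeries_zero (ha : ∀ j : ℕ, a ≠ -(j : ℝ) / 2) (n : ℕ) :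
    (2 * n + 2 * a + 1) * PowerSeries.coeff (n + 1) (hcbSeries a 0) =
      (2 * n + 2 * a) * PowerSeries.coeff n (hcbSeries a 0) := by
  have hp := poch_ne_zero (add_half_add_ne_zero ha) n
  have hn := add_half_add_ne_zero ha n
  simp only [hcbSeries, PowerSeries.coeff_mk, poch, pow_zero, mul_one]
  rw [mul_div_mul_comm, show (a + n) / (a + 1 / 2 + n) = (2 * n + 2 * a) / (2 * n + 2 * a + 1) by
    rw [div_eq_div_iff hn (by contrapose! hn; linarith)]; ring]
  have : 2 * (n : ℝ) + 2 * a + 1 ≠ 0 := by contrapose! hn; linarith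
  generalize poch (a + 1 / 2) n = v at *
  generalize 2 * (n : ℝ) + 2 * a + 1 = w at *
  field_simp

/-- Coefficientwise form of the first-order equation satisfied by `hcbSeries a 0`. -/
theorem coeff_succ_ode (f : PowerSeries ℝ) (a : ℝ) (n : ℕ) :
    PowerSeries.coeff (n + 1) (2 * PowerSeries.X * (1 - PowerSeries.X) *
        PowerSeries.derivative ℝ f +
      (PowerSeries.C (2 * a - 1) - PowerSeries.C (2 * a) * PowerSeries.X) * f) =
    (2 * n + 2 * a + 1) * PowerSeries.coeff (n + 1) f -
      (2 * n + 2 * a) * PowerSeries.coeff n f := by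
  rw [show 2 * PowerSeries.X * (1 - PowerSeries.X) * PowerSeries.derivative ℝ f +
      (PowerSeries.C (2 * a - 1) - PowerSeries.C (2 * a) * PowerSeries.X) * f =
      PowerSeries.X * PowerSeries.derivative ℝ f + PowerSeries.X * PowerSeries.derivative ℝ f
      - (PowerSeries.X * (PowerSeries.X * PowerSeries.derivative ℝ f)
        + PowerSeries.X * (PowerSeries.X * PowerSeries.derivative ℝ f))
      + (PowerSeries.C (2 * a - 1) * f - PowerSeries.C (2 * a) * (PowerSeries.X * f)) by ring]
  simp only [map_add (PowerSeries.coeff (n + 1)), map_sub (PowerSeries.coeff (n + 1)),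
    PowerSeries.coeff_C_mul, PowerSeries.coeff_succ_X_mul, PowerSeries.coeff_derivative,
    coeff_X_mul_derivative]
  ring

theorem hcbSeries_zero_ode (ha : ∀ j : ℕ, a ≠ -(j : ℝ) / 2) :
    2 * PowerSeries.X * (1 - PowerSeries.X) * PowerSeries.derivative ℝ (hcbSeries a 0) +
      (PowerSeries.C (2 * a - 1) - PowerSeries.C (2 * a) * PowerSeries.X) * hcbSeries a 0 =
    PowerSeries.C (2 * a - 1) := by
  ext n
  cases n with
  | zero => simp [hcbSeries, poch]
  | succ m =>
    rw [coeff_succ_ode, coeff_succ_hcbSeries_zero ha, sub_self, PowerSeries.coeff_C,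
      if_neg m.succ_ne_zero]

theorem invSqrtSeries_mul_halfGaussSeries_ode (ha : ∀ j : ℕ, a ≠ -(j : ℝ) / 2) :
    2 * PowerSeries.X * (1 - PowerSeries.X) *
        PowerSeries.derivative ℝ (invSqrtSeries * halfGaussSeries a) +
      (PowerSeries.C (2 * a - 1) - PowerSeries.C (2 * a) * PowerSeries.X) *
        (invSqrtSeries * halfGaussSeries a) =
    PowerSeries.C (2 * a - 1) := by
  have hC : PowerSeries.C (2 * a) = PowerSeries.C (2 * a - 1) + 1 := by
    rw [← map_one PowerSeries.C, ← map_add, sub_add_cancel]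
  rw [Derivation.leibniz, smul_eq_mul, smul_eq_mul, hC]
  linear_combination PowerSeries.X * halfGaussSeries a * invSqrtSeries_ode +
    (1 - PowerSeries.X) * invSqrtSeries * halfGaussSeries_ode ha +
    PowerSeries.C (2 * a - 1) * invSqrtSeries_sq

/-- Euler's transformation of `₂F₁(a, 1; a + 1/2; X)`. -/
theorem hcbSeries_zero_eq (ha : ∀ j : ℕ, a ≠ -(j : ℝ) / 2) :
    hcbSeries a 0 = invSqrtSeries * halfGaussSeries a := by
  ext n
  induction n with
  | zero =>
    simp [hcbSeries, invSqrtSeries, halfGaussSeries, poch]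
  | succ m ih =>
    have h := coeff_succ_ode (invSqrtSeries * halfGaussSeries a) a m
    rw [invSqrtSeries_mul_halfGaussSeries_ode ha, PowerSeries.coeff_C, if_neg m.succ_ne_zero] at h
    have hn : 2 * (m : ℝ) + 2 * a + 1 ≠ 0 := by
      have := add_half_add_ne_zero ha m
      contrapose! this
      linarith
    apply mul_left_cancel₀ hn
    rw [coeff_succ_hcbSeries_zero ha, ih]
    linarith

theorem one_sub_X_mul_derivative_pow (k : ℕ) :
    (1 - PowerSeries.X) * PowerSeries.derivative ℝ ((1 - PowerSeries.X) ^ k) =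
      -(k : PowerSeries ℝ) * (1 - PowerSeries.X) ^ k := by
  cases k with
  | zero => simp
  | succ m =>
    rw [PowerSeries.derivative_pow, map_sub, PowerSeries.derivative_one, PowerSeries.derivative_X,
      Nat.add_sub_cancel]
    ring

theorem hcbSeries_mul_one_sub_pow (ha : ∀ j : ℕ, a ≠ -(j : ℝ) / 2) (k : ℕ) :
    2 ^ k * hcbSeries a k * (1 - PowerSeries.X) ^ k =
      PowerSeries.C (2 * a - 1) * (lehmerPa a k : PowerSeries ℝ) +
        hcbSeries a 0 * (lehmerQ k : PowerSeries ℝ) := by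
  induction k with
  | zero => simp [lehmerPa, lehmerQ]
  | succ k ih =>
    have hd := congrArg (PowerSeries.derivative ℝ) ih
    have h2 : PowerSeries.derivative ℝ ((2 : PowerSeries ℝ) ^ k) = 0 := by
      rw [← map_ofNat PowerSeries.C 2, ← map_pow, PowerSeries.derivative_C]
    simp only [map_add, Derivation.leibniz, smul_eq_mul, PowerSeries.derivative_C,
      PowerSeries.derivative_coe, h2] at hd
    have hW := one_sub_X_mul_derivative_pow k
    have hU := X_mul_derivative_hcbSeries a k
    have hH := hcbSeries_zero_ode ha
    have hc2 : ((2 : ℝ[X]) : PowerSeries ℝ) = 2 := map_ofNat coeToPowerSeries.ringHom 2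
    have hck : ((k : ℝ[X]) : PowerSeries ℝ) = k := map_natCast coeToPowerSeries.ringHom k
    simp only [lehmerPa, lehmerQ, coe_add, coe_mul, coe_sub, coe_C, coe_X, coe_one, hc2, hck,
      map_sub, map_mul, map_ofNat, map_natCast, map_one] at hd hH ih ⊢
    linear_combination 2 * PowerSeries.X * (1 - PowerSeries.X) * hd
      - 2 ^ (k + 1) * (1 - PowerSeries.X) * (1 - PowerSeries.X) ^ k * hU
      - 2 ^ (k + 1) * PowerSeries.X * hcbSeries a k * hW
      + (2 * PowerSeries.C a * (1 - PowerSeries.X) + 2 * k * PowerSeries.X) * ih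
      + (lehmerQ k : PowerSeries ℝ) * hH

end FormalIdentities

section Convergence

variable {a x : ℝ}

theorem hasAbsEval_invSqrtSeries (hx0 : 0 ≤ x) (hx1 : x < 1) :
    HasAbsEval invSqrtSeries x (1 / √(1 - x)) := by
  have hs : Summable fun n => ‖PowerSeries.coeff n invSqrtSeries * x ^ n‖ := by
    refine summable_norm_of_succ_eq_mul (ρ := fun n => ((n : ℝ) + 1 / 2) / (n + 1) * x)
      (L := 1 * x) (fun n => ?_) ((tendsto_natCast_add_div_natCast_add _ _).mul_const x)
      (by rwa [one_mul, abs_of_nonneg hx0])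
    have hf : (n.factorial : ℝ) ≠ 0 := by positivity
    have hn : (n : ℝ) + 1 ≠ 0 := by positivity
    simp only [invSqrtSeries, PowerSeries.coeff_mk, poch, Nat.factorial_succ]
    push_cast
    field_simp
    ring
  refine ⟨hs, ?_⟩
  have hB : HasAbsEval invSqrtSeries x (∑' n, PowerSeries.coeff n invSqrtSeries * x ^ n) :=
    ⟨hs, rfl⟩
  have hpos : 0 ≤ ∑' n, PowerSeries.coeff n invSqrtSeries * x ^ n := by
    refine tsum_nonneg fun n => mul_nonneg ?_ (pow_nonneg hx0 n)
    have hp : ∀ m, 0 ≤ poch (1 / 2) m := by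
      intro m
      induction m with
      | zero => simp [poch]
      | succ m ih => exact mul_nonneg ih (by positivity)
    simpa [invSqrtSeries] using div_nonneg (hp n) (Nat.cast_nonneg n.factorial)
  have hsq := (hB.mul hB).mul (hasAbsEval_coe (1 - X) x)
  rw [coe_sub, coe_one, coe_X, invSqrtSeries_sq, ← coe_one] at hsq
  have h1 := hsq.unique (hasAbsEval_coe 1 x)
  simp only [eval_sub, eval_one, eval_X] at h1
  have hy : 0 < 1 - x := sub_pos.2 hx1
  rw [one_div, ← Real.sqrt_inv, eq_comm, Real.sqrt_eq_iff_mul_self_eq (inv_nonneg.2 hy.le) hpos]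
  exact (eq_inv_of_mul_eq_one_left h1).symm

theorem hasAbsEval_halfGaussSeries (a : ℝ) (hx : |x| < 1) :
    HasAbsEval (halfGaussSeries a) x (Gauss2F1 (1 / 2) (a - 1 / 2) (a + 1 / 2) x) := by
  refine ⟨?_, by simp only [halfGaussSeries, PowerSeries.coeff_mk, Gauss2F1]⟩
  refine summable_norm_of_succ_eq_mul
    (ρ := fun n => ((n : ℝ) + 1 / 2) / (n + 1) * ((n + (a - 1 / 2)) / (n + (a + 1 / 2))) * x)
    (L := 1 * 1 * x) (fun n => ?_) (((tendsto_natCast_add_div_natCast_add _ _).mul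
      (tendsto_natCast_add_div_natCast_add _ _)).mul_const x) (by simpa using hx)
  simp only [halfGaussSeries, PowerSeries.coeff_mk, poch, Nat.factorial_succ]
  push_cast
  rw [pow_succ, add_comm (n : ℝ) (a + 1 / 2), add_comm (n : ℝ) (a - 1 / 2),
    add_comm (n : ℝ) (1 / 2)]
  simp only [div_eq_mul_inv, mul_inv]
  ring

theorem summable_hcbSeries (ha : ∀ j : ℕ, a ≠ -(j : ℝ) / 2) (k : ℕ) (hx : |x| < 1) :
    Summable fun n => ‖PowerSeries.coeff n (hcbSeries a k) * x ^ n‖ := by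
  refine summable_norm_of_succ_eq_mul
    (ρ := fun n => ((n : ℝ) + a) / (n + (a + 1 / 2)) * ((n + (1 + a)) / (n + a)) ^ k * x)
    (L := 1 * 1 ^ k * x) (fun n => ?_) (((tendsto_natCast_add_div_natCast_add _ _).mul
      ((tendsto_natCast_add_div_natCast_add _ _).pow k)).mul_const x) (by simpa using hx)
  have hn := pow_ne_zero k (natCast_add_ne_zero ha n)
  simp only [hcbSeries, PowerSeries.coeff_mk, poch]
  push_cast
  rw [pow_succ, div_pow, add_comm (n : ℝ) (a + 1 / 2), ← add_assoc, mul_div_mul_comm, add_comm a n]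
  field_simp

end Convergence

theorem genBinom_two_mul_ne_zero {a : ℝ} (ha : ∀ j : ℕ, a ≠ -(j : ℝ) / 2) :
    genBinom (2 * a) a ≠ 0 := by
  have h1 : Real.Gamma (a + 1) ≠ 0 := by
    refine Real.Gamma_ne_zero fun m h => natCast_add_ne_zero ha (m + 1) ?_
    push_cast
    linarith
  have h2 : Real.Gamma (2 * a + 1) ≠ 0 := by
    refine Real.Gamma_ne_zero fun m h => ha (m + 1) ?_
    push_cast
    linarith
  rw [genBinom, show 2 * a - a + 1 = a + 1 by ring]
  exact div_ne_zero h2 (mul_ne_zero h1 h1)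

theorem genBinom_two_mul_succ {b : ℝ} (hb : b + 1 ≠ 0) (hb' : 2 * b + 1 ≠ 0) :
    (b + 1) * genBinom (2 * (b + 1)) (b + 1) = 4 * (b + 1 / 2) * genBinom (2 * b) b := by
  have e1 : Real.Gamma (2 * (b + 1) + 1) =
      (2 * b + 2) * ((2 * b + 1) * Real.Gamma (2 * b + 1)) := by
    rw [← Real.Gamma_add_one hb', show 2 * b + 1 + 1 = 2 * b + 2 by ring,
      ← Real.Gamma_add_one (by contrapose! hb; linarith)]
    ring_nf
  rw [genBinom, genBinom, show 2 * (b + 1) - (b + 1) + 1 = b + 1 + 1 by ring,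
    show 2 * b - b + 1 = b + 1 by ring, e1, Real.Gamma_add_one hb]
  by_cases hG : Real.Gamma (b + 1) = 0
  · simp [hG]
  · field_simp
    ring

theorem pow_div_genBinom {a : ℝ} (ha : ∀ j : ℕ, a ≠ -(j : ℝ) / 2) (n : ℕ) :
    4 ^ n / genBinom (2 * (n + a)) (n + a) =
      poch a n * (n + a) / (a * poch (a + 1 / 2) n * genBinom (2 * a) a) := by
  have ha0 : a ≠ 0 := by simpa using natCast_add_ne_zero ha 0
  have hshift : ∀ n : ℕ, ∀ j : ℕ, (n : ℝ) + a ≠ -(j : ℝ) / 2 := by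
    intro n j h
    apply ha (j + 2 * n)
    push_cast
    linarith
  induction n with
  | zero =>
    have := genBinom_two_mul_ne_zero ha
    simp [poch]
    field_simp
  | succ n ih =>
    have hg := genBinom_two_mul_ne_zero (hshift n)
    have hg' := genBinom_two_mul_ne_zero (hshift (n + 1))
    have hn := natCast_add_ne_zero ha (n + 1)
    have hh := add_half_add_ne_zero ha n
    have hp := poch_ne_zero (add_half_add_ne_zero ha) n
    have hga := genBinom_two_mul_ne_zero ha
    have e : ((n + 1 : ℕ) : ℝ) + a = n + a + 1 := by push_cast; ring
    rw [e] at hg' hn ⊢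
    have hs := genBinom_two_mul_succ (b := n + a) hn (by contrapose! hh; linarith)
    rw [div_eq_div_iff hg (by positivity)] at ih
    simp only [poch]
    rw [div_eq_div_iff hg' (mul_ne_zero (mul_ne_zero ha0 (mul_ne_zero hp hh)) hga), pow_succ]
    linear_combination 4 * (a + 1 / 2 + n) * ih - poch a n * (a + n) * hs

theorem phiHCB_eq_tsum (k : ℕ) {a : ℝ} (ha : ∀ j : ℕ, a ≠ -(j : ℝ) / 2) {z : ℝ} (hz : 0 < z) :
    PhiHCB (1 - k) a z = 4 ^ a * z ^ (2 * a) / (a * genBinom (2 * a) a) *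
      ∑' n, PowerSeries.coeff n (hcbSeries a k) * (z ^ 2) ^ n := by
  rw [PhiHCB, ← tsum_mul_left]
  refine tsum_congr fun n => ?_
  have hn := natCast_add_ne_zero ha n
  have h4 : (2 * z) ^ (2 * ((n : ℝ) + a)) = 4 ^ a * z ^ (2 * a) * (4 ^ n * (z ^ 2) ^ n) := by
    rw [Real.rpow_mul (by positivity), Real.rpow_add (by positivity), Real.rpow_natCast,
      Real.rpow_mul hz.le, ← Real.mul_rpow (by norm_num) (by positivity), ← mul_pow, Real.rpow_two,
      Real.rpow_two, mul_pow]
    norm_num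
    ring
  rw [zpow_sub₀ hn, zpow_one, zpow_natCast, h4, ← div_div, mul_comm ((4 : ℝ) ^ n), ← mul_assoc,
    mul_div_assoc _ ((4 : ℝ) ^ n), pow_div_genBinom ha]
  simp only [hcbSeries, PowerSeries.coeff_mk]
  field_simp

/-- For every integer `k ≥ 0`, real `a` not of the form `-j/2` (`j ∈ ℤ_{≥0}`), and `0 < z < 1`:
`2^{k-1} Φ_HCB(1-k,a,z) = (4^a z^{2a})/(2a C(2a,a) (1-z²)^{k+1/2})
  ⬝ ( (2a-1) √(1-z²) p_{k-1}(a,z²) + ₂F₁(1/2, a-1/2; a+1/2; z²) q_{k-1}(z²) )`. -/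
theorem phiHCB_nonpos_values (k : ℕ) (a : ℝ) (ha : ∀ j : ℕ, a ≠ -(j : ℝ) / 2)
    (z : ℝ) (hz0 : 0 < z) (hz1 : z < 1) :
    (2 : ℝ) ^ ((k : ℤ) - 1) * PhiHCB (1 - k) a z =
      (4 : ℝ) ^ a * z ^ (2 * a) /
          (2 * a * genBinom (2 * a) a * (1 - z ^ 2) ^ ((k : ℝ) + 1 / 2)) *
        ((2 * a - 1) * Real.sqrt (1 - z ^ 2) * (lehmerPa a k).eval (z ^ 2) +
          Gauss2F1 (1 / 2) (a - 1 / 2) (a + 1 / 2) (z ^ 2) * (lehmerQ k).eval (z ^ 2)) := by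
  have hx0 : 0 ≤ z ^ 2 := sq_nonneg z
  have hx1 : z ^ 2 < 1 := by nlinarith
  have hxa : |z ^ 2| < 1 := by rwa [abs_of_nonneg hx0]
  have hy : 0 < 1 - z ^ 2 := sub_pos.2 hx1
  have ha0 : a ≠ 0 := by simpa using natCast_add_ne_zero ha 0
  have hg := genBinom_two_mul_ne_zero ha
  set U := ∑' n, PowerSeries.coeff n (hcbSeries a k) * (z ^ 2) ^ n with hU
  have hUe : HasAbsEval (hcbSeries a k) (z ^ 2) U := ⟨summable_hcbSeries ha k hxa, rfl⟩
  have hl := ((hasAbsEval_coe (2 ^ k) (z ^ 2)).mul hUe).mul (hasAbsEval_coe ((1 - X) ^ k) (z ^ 2))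
  have hr := ((hasAbsEval_coe (C (2 * a - 1)) (z ^ 2)).mul
      (hasAbsEval_coe (lehmerPa a k) (z ^ 2))).add
    (((hasAbsEval_invSqrtSeries hx0 hx1).mul (hasAbsEval_halfGaussSeries a hxa)).mul
      (hasAbsEval_coe (lehmerQ k) (z ^ 2)))
  have hc2 : ((2 : ℝ[X]) : PowerSeries ℝ) = 2 := map_ofNat coeToPowerSeries.ringHom 2
  rw [coe_pow, coe_pow, hc2, coe_sub, coe_one, coe_X, hcbSeries_mul_one_sub_pow ha k,
    hcbSeries_zero_eq ha, ← coe_C] at hl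
  have key := hl.unique hr
  simp only [eval_pow, eval_ofNat, eval_sub, eval_one, eval_X, eval_C] at key
  have hs : √(1 - z ^ 2) ≠ 0 := (Real.sqrt_pos.2 hy).ne'
  have hyk : (1 - z ^ 2) ^ k ≠ 0 := pow_ne_zero k hy.ne'
  rw [phiHCB_eq_tsum k ha hz0, ← hU, Real.rpow_add hy, Real.rpow_natCast, ← Real.sqrt_eq_rpow,
    zpow_sub₀ two_ne_zero, zpow_natCast, zpow_one]
  field_simp at key ⊢
  linear_combination key
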